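/- Let 0 < r < 2 and m ∈ ℕ, m ≥ 1, and let K ≥ 0 be a constant such that for every N ∈ ℕ and every array of real scalars (y_{i₁…i_m})_{i₁,…,i_m=1}^{N} one has (∑_{i₁,…,i_m=1}^{N} |y_{i₁…i_m}|²)^{1/2} ≤ K · (∫_{[0,1]^m} |∑_{i₁,…,i_m=1}^{N} r_{i₁}(t₁)···r_{i_m}(t_m) y_{i₁…i_m}|^{r} dt₁···dt_m)^{1/r}. Then K ≥ (A_r)^m; that is, the optimal constant in the multiple Khintchine inequality is exactly (A_r)^m. -/

import Mathlib

open MeasureTheory Real Filter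

/-- The `j`-th Rademacher function, `r_j(t) = sgn(sin(2^j π t))`. -/
noncomputable def rademacher (j : ℕ) (t : ℝ) : ℝ :=
  Real.sign (Real.sin ((2 : ℝ) ^ j * Real.pi * t))

/-- `p₀ ∈ (1,2)` is the unique solution of `Γ((p₀+1)/2) = √π / 2`. -/
noncomputable def khintchineP0 : ℝ :=
  sInf {p : ℝ | 1 < p ∧ p < 2 ∧ Real.Gamma ((p + 1) / 2) = Real.sqrt Real.pi / 2}

/-- The optimal constant `A_r` in the Khintchine inequality. -/
noncomputable def khintchineA (r : ℝ) : ℝ :=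
  if r ≤ khintchineP0 then (2 : ℝ) ^ (1 / r - 1 / 2)
  else if r < 2 then
    (1 / Real.sqrt 2) * (Real.Gamma ((r + 1) / 2) / Real.sqrt Real.pi) ^ (-(1 / r))
  else 1

/-- The `ℓ_p` norm of a vector in `ℝⁿ` (for finite `p`). -/
noncomputable def lpNorm (p : ℝ) {n : ℕ} (x : Fin n → ℝ) : ℝ :=
  (∑ i, |x i| ^ p) ^ (1 / p)

/-- The `ℓ_∞` norm of a vector in `ℝⁿ`. -/
noncomputable def linfNorm {n : ℕ} (x : Fin n → ℝ) : ℝ :=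
  ⨆ i, |x i|

/-! Product arrays `y i = ∏ k, a (i k)` turn the inequality into the `m`-th power of the
one-variable inequality for the coefficients `a`. Take `n` coefficients equal to `1 / √n`: one
coefficient gives the bound `1`, two give `2 ^ (1 / r - 1 / 2)`, and letting `n → ∞` gives the
reciprocal of the `Lʳ` norm of a standard Gaussian, by the central limit theorem together with
convergence of the `r`-th moments, which holds because the second moments stay bounded. -/

open ProbabilityTheory
open scoped Topology NNReal ENNReal

lemma rpow_le_min_rpow_add {p q x M : ℝ} (hpq : p ≤ q) (hx : 0 ≤ x) (hM : 0 < M) :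
    x ^ p ≤ min x M ^ p + M ^ (p - q) * x ^ q := by
  rcases le_or_gt x M with h | h
  · rw [min_eq_left h]
    exact le_add_of_nonneg_right (by positivity)
  · have hx' : 0 < x := hM.trans h
    calc x ^ p = x ^ (p - q) * x ^ q := by rw [← rpow_add hx', sub_add_cancel]
      _ ≤ M ^ (p - q) * x ^ q := by
        gcongr ?_ * _
        exact rpow_le_rpow_of_nonpos hM h.le (sub_nonpos.2 hpq)
      _ ≤ min x M ^ p + M ^ (p - q) * x ^ q := le_add_of_nonneg_left (by positivity)

section TruncatedMoment

variable {E Ω : Type*} [NormedAddCommGroup E] [MeasurableSpace E] [OpensMeasurableSpace E]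
  {mΩ : MeasurableSpace Ω} {μ : Measure Ω} {X : Ω → E} {p q M : ℝ}

lemma tendsto_integral_min_norm_rpow_atTop (hX : AEMeasurable X μ) (hp : 0 ≤ p)
    (hXp : Integrable (fun ω ↦ ‖X ω‖ ^ p) μ) :
    Tendsto (fun M : ℝ ↦ ∫ ω, min ‖X ω‖ M ^ p ∂μ) atTop (𝓝 (∫ ω, ‖X ω‖ ^ p ∂μ)) := by
  refine tendsto_integral_filter_of_dominated_convergence (fun ω ↦ ‖X ω‖ ^ p)
    (.of_forall fun M ↦ ((hX.norm.min aemeasurable_const).pow_const p).aestronglyMeasurable)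
    ?_ hXp (ae_of_all _ fun ω ↦ ?_)
  · filter_upwards [eventually_ge_atTop 0] with M hM
    refine ae_of_all _ fun ω ↦ ?_
    rw [norm_of_nonneg (by positivity)]
    exact rpow_le_rpow (by positivity) (min_le_left _ _) hp
  · refine tendsto_const_nhds.congr' ?_
    filter_upwards [eventually_ge_atTop ‖X ω‖] with M hM
    rw [min_eq_left hM]

variable [IsFiniteMeasure μ]

lemma integrable_min_norm_rpow (hX : AEMeasurable X μ) (hp : 0 ≤ p) (hM : 0 ≤ M) :
    Integrable (fun ω ↦ min ‖X ω‖ M ^ p) μ := by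
  refine Integrable.of_bound (C := M ^ p) ?_ (ae_of_all _ fun ω ↦ ?_)
  · exact ((hX.norm.min aemeasurable_const).pow_const p).aestronglyMeasurable
  · rw [norm_of_nonneg (by positivity)]
    exact rpow_le_rpow (by positivity) (min_le_right _ _) hp

lemma integrable_norm_rpow_of_le (hX : AEMeasurable X μ) (hp : 0 ≤ p) (hpq : p ≤ q)
    (hXq : Integrable (fun ω ↦ ‖X ω‖ ^ q) μ) : Integrable (fun ω ↦ ‖X ω‖ ^ p) μ := by
  refine ((integrable_min_norm_rpow hX hp zero_le_one).add (hXq.const_mul (1 ^ (p - q)))).mono'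
    (hX.norm.pow_const p).aestronglyMeasurable (ae_of_all _ fun ω ↦ ?_)
  rw [norm_of_nonneg (by positivity)]
  exact rpow_le_min_rpow_add hpq (norm_nonneg _) one_pos

lemma dist_integral_norm_rpow_integral_min_norm_rpow_le (hX : AEMeasurable X μ) (hp : 0 ≤ p)
    (hpq : p ≤ q) (hM : 0 < M) (hXq : Integrable (fun ω ↦ ‖X ω‖ ^ q) μ) :
    dist (∫ ω, ‖X ω‖ ^ p ∂μ) (∫ ω, min ‖X ω‖ M ^ p ∂μ)
      ≤ M ^ (p - q) * ∫ ω, ‖X ω‖ ^ q ∂μ := by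
  have hmin := integrable_min_norm_rpow hX hp hM.le
  have hXp := integrable_norm_rpow_of_le hX hp hpq hXq
  have hlower : ∫ ω, min ‖X ω‖ M ^ p ∂μ ≤ ∫ ω, ‖X ω‖ ^ p ∂μ :=
    integral_mono hmin hXp fun ω ↦ rpow_le_rpow (by positivity) (min_le_left _ _) hp
  have hupper : ∫ ω, ‖X ω‖ ^ p ∂μ
      ≤ ∫ ω, min ‖X ω‖ M ^ p ∂μ + M ^ (p - q) * ∫ ω, ‖X ω‖ ^ q ∂μ := by
    rw [← integral_const_mul, ← integral_add hmin (hXq.const_mul _)]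
    exact integral_mono hXp (hmin.add (hXq.const_mul _))
      fun ω ↦ rpow_le_min_rpow_add hpq (norm_nonneg _) hM
  rw [dist_eq, abs_of_nonneg (sub_nonneg.2 hlower)]
  linarith

end TruncatedMoment

section MomentConvergence

variable {E ι Ω' : Type*} {Ω : ι → Type*} [NormedAddCommGroup E] [MeasurableSpace E]
  [OpensMeasurableSpace E] {mΩ : ∀ i, MeasurableSpace (Ω i)} {mΩ' : MeasurableSpace Ω'}
  {μ : ∀ i, Measure (Ω i)} [∀ i, IsProbabilityMeasure (μ i)]
  {ν : Measure Ω'} [IsProbabilityMeasure ν]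
  {X : ∀ i, Ω i → E} {Z : Ω' → E} {l : Filter ι} {p q C M : ℝ}

lemma tendsto_integral_min_norm_rpow_of_tendstoInDistribution
    (hX : TendstoInDistribution X l Z μ ν) (hp : 0 ≤ p) (hM : 0 ≤ M) :
    Tendsto (fun i ↦ ∫ ω, min ‖X i ω‖ M ^ p ∂μ i) l (𝓝 (∫ ω, min ‖Z ω‖ M ^ p ∂ν)) := by
  have hcont : Continuous fun x : E ↦ min ‖x‖ M ^ p :=
    (continuous_norm.min continuous_const).rpow_const fun _ ↦ Or.inr hp
  let f : BoundedContinuousFunction E ℝ :=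
    BoundedContinuousFunction.ofNormedAddCommGroup _ hcont (M ^ p) fun x ↦ by
      rw [norm_of_nonneg (by positivity)]
      exact rpow_le_rpow (by positivity) (min_le_right _ _) hp
  have hf := ProbabilityMeasure.tendsto_iff_forall_integral_tendsto.1 hX.tendsto f
  have hf_meas (κ : Measure E) : AEStronglyMeasurable f κ :=
    f.continuous.measurable.aestronglyMeasurable
  simp only [ProbabilityMeasure.coe_mk, integral_map hX.aemeasurable_limit (hf_meas _),
    integral_map (hX.forall_aemeasurable _) (hf_meas _)] at hf
  exact hf

theorem tendsto_integral_norm_rpow_of_tendstoInDistribution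
    (hX : TendstoInDistribution X l Z μ ν) (hp : 0 ≤ p) (hpq : p < q)
    (hXq : ∀ i, Integrable (fun ω ↦ ‖X i ω‖ ^ q) (μ i))
    (hC : ∀ i, ∫ ω, ‖X i ω‖ ^ q ∂μ i ≤ C) (hZ : Integrable (fun ω ↦ ‖Z ω‖ ^ p) ν) :
    Tendsto (fun i ↦ ∫ ω, ‖X i ω‖ ^ p ∂μ i) l (𝓝 (∫ ω, ‖Z ω‖ ^ p ∂ν)) := by
  have hunif : TendstoUniformly (fun (M : ℝ) i ↦ ∫ ω, min ‖X i ω‖ M ^ p ∂μ i)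
      (fun i ↦ ∫ ω, ‖X i ω‖ ^ p ∂μ i) atTop := by
    have htail : Tendsto (fun M : ℝ ↦ M ^ (p - q) * C) atTop (𝓝 0) := by
      simpa using (tendsto_rpow_neg_atTop (sub_pos.2 hpq)).mul_const C
    refine Metric.tendstoUniformly_iff.2 fun ε hε ↦ ?_
    filter_upwards [htail.eventually_lt_const hε, eventually_gt_atTop 0] with M hMε hM i
    calc _ ≤ M ^ (p - q) * ∫ ω, ‖X i ω‖ ^ q ∂μ i :=
          dist_integral_norm_rpow_integral_min_norm_rpow_le (hX.forall_aemeasurable i) hp hpq.le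
            hM (hXq i)
      _ ≤ M ^ (p - q) * C := by gcongr; exact hC i
      _ < ε := hMε
  refine hunif.tendsto_of_eventually_tendsto ?_
    (tendsto_integral_min_norm_rpow_atTop hX.aemeasurable_limit hp hZ)
  filter_upwards [eventually_ge_atTop 0] with M hM
  exact tendsto_integral_min_norm_rpow_of_tendstoInDistribution hX hp hM

end MomentConvergence

section GaussianMoment

lemma integrable_abs_rpow_gaussianReal (μ : ℝ) (v : ℝ≥0) {p : ℝ} (hp : 0 ≤ p) :
    Integrable (fun x ↦ |x| ^ p) (gaussianReal μ v) :=
  (memLp_id_gaussianReal (μ := μ) (v := v) ⟨p, hp⟩).integrable_norm_rpow'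

theorem integral_abs_rpow_gaussianReal {v : ℝ≥0} (hv : v ≠ 0) {p : ℝ} (hp : -1 < p) :
    ∫ x, |x| ^ p ∂gaussianReal 0 v = (2 * v) ^ (p / 2) * (Gamma ((p + 1) / 2) / √π) := by
  have hv' : (0 : ℝ) < 2 * v := by positivity
  have hpdf (x : ℝ) : gaussianPDFReal 0 v x • |x| ^ p
      = (√(2 * v * π))⁻¹ * (fun y : ℝ ↦ y ^ p * rexp (-(2 * v : ℝ)⁻¹ * y ^ (2 : ℝ))) |x| := by
    simp only [gaussianPDFReal, sub_zero, smul_eq_mul, rpow_two, sq_abs]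
    ring_nf
  have hscale : ((2 * v : ℝ)⁻¹) ^ (-(p + 1) / 2) = (2 * v) ^ (p / 2) * √(2 * v) := by
    rw [inv_rpow hv'.le, ← rpow_neg hv'.le, sqrt_eq_rpow, ← rpow_add hv']
    ring_nf
  rw [integral_gaussianReal_eq_integral_smul hv]
  simp_rw [hpdf]
  rw [integral_const_mul,
    integral_comp_abs (f := fun y : ℝ ↦ y ^ p * rexp (-(2 * v : ℝ)⁻¹ * y ^ (2 : ℝ))),
    integral_rpow_mul_exp_neg_mul_rpow two_pos hp (inv_pos.2 hv'), hscale, sqrt_mul hv'.le]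
  field_simp

end GaussianMoment

section CentralLimitTheorem

variable {Ω : Type*} {mΩ : MeasurableSpace Ω} {P : Measure Ω} [IsProbabilityMeasure P]
  {X : ℕ → Ω → ℝ}

lemma integral_inv_sqrt_mul_sum_sq_le_one (hX : ∀ i, MemLp (X i) 2 P) (h0 : ∀ i, P[X i] = 0)
    (h1 : ∀ i, P[X i ^ 2] = 1) (hindep : Pairwise fun i j ↦ X i ⟂ᵢ[P] X j) (n : ℕ) :
    ∫ ω, ((√n)⁻¹ * ∑ i ∈ Finset.range n, X i ω) ^ 2 ∂P ≤ 1 := by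
  have hmean : P[∑ i ∈ Finset.range n, X i] = 0 := by
    simp only [Finset.sum_apply]
    rw [integral_finsetSum _ fun i _ ↦ (hX i).integrable one_le_two]
    exact Finset.sum_eq_zero fun i _ ↦ h0 i
  have hvar : ∫ ω, (∑ i ∈ Finset.range n, X i ω) ^ 2 ∂P = n := by
    have h := IndepFun.variance_sum (fun i _ ↦ hX i)
      (fun i _ j _ hij ↦ hindep hij : (Finset.range n : Set ℕ).Pairwise _)
    rw [variance_of_integral_eq_zero (Finset.aemeasurable_sum _ fun i _ ↦ (hX i).aemeasurable)
      hmean] at h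
    simp only [Finset.sum_apply] at h
    rw [h]
    have hvar1 (i : ℕ) : Var[X i; P] = 1 := by
      rw [variance_of_integral_eq_zero (hX i).aemeasurable (h0 i)]
      exact h1 i
    simp only [hvar1, Finset.sum_const, Finset.card_range, nsmul_eq_mul, mul_one]
  simp_rw [mul_pow, inv_pow, sq_sqrt n.cast_nonneg]
  rw [integral_const_mul, hvar]
  exact inv_mul_le_one

theorem tendsto_integral_abs_inv_sqrt_mul_sum_rpow (h0 : P[X 0] = 0) (h1 : P[X 0 ^ 2] = 1)
    (hindep : iIndepFun X P) (hident : ∀ i, IdentDistrib (X i) (X 0) P P) {p : ℝ} (hp : 0 ≤ p)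
    (hp2 : p < 2) :
    Tendsto (fun n : ℕ ↦ ∫ ω, |(√n)⁻¹ * ∑ i ∈ Finset.range n, X i ω| ^ p ∂P) atTop
      (𝓝 (∫ x, |x| ^ p ∂gaussianReal 0 1)) := by
  have hclt := tendstoInDistribution_inv_sqrt_mul_sum (HasLaw.id (μ := gaussianReal 0 1)) h0 h1
    hindep hident
  have hX : MemLp (X 0) 2 P :=
    (memLp_two_iff_integrable_sq (hident 0).aemeasurable_fst.aestronglyMeasurable).2
      (.of_integral_ne_zero (h1.trans_ne one_ne_zero))
  have hL2 (i : ℕ) : MemLp (X i) 2 P := (hident i).symm.memLp_snd hX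
  have hS (n : ℕ) : MemLp (fun ω ↦ (√n)⁻¹ * ∑ i ∈ Finset.range n, X i ω) 2 P :=
    (memLp_finsetSum _ fun i _ ↦ hL2 i).const_mul _
  refine tendsto_integral_norm_rpow_of_tendstoInDistribution hclt hp hp2 (C := 1) (fun n ↦ ?_)
    (fun n ↦ ?_) (integrable_abs_rpow_gaussianReal 0 1 hp)
  · simpa only [norm_eq_abs, rpow_two, sq_abs] using (hS n).integrable_sq
  · simpa only [norm_eq_abs, rpow_two, sq_abs] using integral_inv_sqrt_mul_sum_sq_le_one hL2
      (fun i ↦ (hident i).integral_eq.trans h0) (fun i ↦ (hident i).sq.integral_eq.trans h1)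
      (fun i j hij ↦ hindep.indepFun hij) n

end CentralLimitTheorem

section RademacherFunctions

lemma measurable_rademacher (j : ℕ) : Measurable (rademacher j) := by
  have hsign : Measurable Real.sign :=
    .ite measurableSet_Iio measurable_const
      (.ite measurableSet_Ioi measurable_const measurable_const)
  exact hsign.comp (by fun_prop)

lemma rademacher_succ_div_two (j : ℕ) (t : ℝ) : rademacher (j + 1) (t / 2) = rademacher j t := by
  unfold rademacher
  congr 2
  ring

lemma rademacher_succ_succ_div_two_add_half (j : ℕ) (t : ℝ) :
    rademacher (j + 2) (t / 2 + 1 / 2) = rademacher (j + 1) t := by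
  have hperiod : (2 : ℝ) ^ (j + 2) * π * (t / 2 + 1 / 2)
      = 2 ^ (j + 1) * π * t + ((2 ^ j : ℕ) : ℝ) * (2 * π) := by
    push_cast
    ring
  unfold rademacher
  rw [hperiod, sin_add_nat_mul_two_pi]

lemma rademacher_one_div_two {t : ℝ} (ht : t ∈ Set.Ioo 0 1) : rademacher 1 (t / 2) = 1 :=
  sign_of_pos <| sin_pos_of_pos_of_lt_pi (by have := ht.1; positivity)
    (by nlinarith [pi_pos, ht.2])

lemma rademacher_one_div_two_add_half {t : ℝ} (ht : t ∈ Set.Ioo 0 1) :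
    rademacher 1 (t / 2 + 1 / 2) = -1 := by
  have hshift : (2 : ℝ) ^ 1 * π * (t / 2 + 1 / 2) = π * t + π := by ring
  unfold rademacher
  rw [hshift, sin_add_pi, sign_of_neg]
  exact neg_lt_zero.2 <| sin_pos_of_pos_of_lt_pi (by have := ht.1; positivity)
    (by nlinarith [pi_pos, ht.2])

/-- Lebesgue measure on `[0,1]`, viewed as a measure on `ℝ`: the probability space of the
Rademacher functions. -/
noncomputable abbrev unitIntervalMeasure : Measure ℝ := volume.restrict (Set.Icc 0 1)

instance : IsProbabilityMeasure unitIntervalMeasure := ⟨by simp⟩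

/-- The law of a fair random sign. -/
noncomputable abbrev rademacherLaw : Measure ℝ := Ber(1, -1, ⟨1 / 2, by norm_num, by norm_num⟩)

lemma rademacherLaw_eq :
    rademacherLaw = (2⁻¹ : ℝ≥0∞) • (Measure.dirac 1 + Measure.dirac (-1)) := by
  have hhalf (p : unitInterval) (hp : (p : ℝ) = 1 / 2) (x : ℝ) :
      unitInterval.toNNReal p • Measure.dirac x = (2⁻¹ : ℝ≥0∞) • Measure.dirac x := by
    have hp' : unitInterval.toNNReal p = 2⁻¹ := by ext; simp [hp]
    rw [hp', ENNReal.smul_def, ENNReal.coe_inv two_ne_zero, ENNReal.coe_ofNat]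
  rw [rademacherLaw, bernoulliMeasure_def, hhalf _ rfl,
    hhalf _ (by norm_num [unitInterval.coe_symm_eq]), smul_add]

lemma map_div_two_add_unitIntervalMeasure (a : ℝ) :
    unitIntervalMeasure.map (fun t ↦ t / 2 + a)
      = (2 : ℝ≥0∞) • volume.restrict (Set.Icc a (a + 1 / 2)) := by
  have hpre : (fun t ↦ t / 2 + a) ⁻¹' Set.Icc a (a + 1 / 2) = Set.Icc (0 : ℝ) 1 := by
    ext t
    simp only [Set.mem_Icc, Set.mem_preimage]
    constructor <;> rintro ⟨h0, h1⟩ <;> constructor <;> linarith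
  have hmap : volume.map (fun t : ℝ ↦ t / 2 + a) = (2 : ℝ≥0∞) • volume := by
    have hhalf : volume.map (fun t : ℝ ↦ t / 2) = (2 : ℝ≥0∞) • volume := by
      simpa [div_eq_mul_inv] using Real.map_volume_mul_right (a := (2⁻¹ : ℝ)) (by norm_num)
    calc volume.map (fun t : ℝ ↦ t / 2 + a)
        = (volume.map (fun t : ℝ ↦ t / 2)).map (· + a) :=
          (Measure.map_map (measurable_add_const a) (measurable_id.div_const 2)).symm
      _ = (2 : ℝ≥0∞) • volume := by
          rw [hhalf, Measure.map_smul, map_add_right_eq_self]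
  rw [unitIntervalMeasure, ← hpre, ← Measure.restrict_map (by fun_prop) measurableSet_Icc, hmap,
    Measure.restrict_smul]

/-- Dyadic gluing: `[0,1]` consists of two half-scale copies of itself, indexed by the sign
of `r₁`. -/
noncomputable def dyadicGlue (x : ℝ × ℝ) : ℝ := x.2 / 2 + (1 - x.1) / 4

lemma measurePreserving_dyadicGlue :
    MeasurePreserving dyadicGlue (rademacherLaw.prod unitIntervalMeasure) unitIntervalMeasure := by
  have hmeas : Measurable dyadicGlue := by unfold dyadicGlue; fun_prop
  have hslice (ε : ℝ) : ((Measure.dirac ε).prod unitIntervalMeasure).map dyadicGlue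
      = (2 : ℝ≥0∞) • volume.restrict (Set.Icc ((1 - ε) / 4) ((1 - ε) / 4 + 1 / 2)) := by
    rw [Measure.dirac_prod, Measure.map_map hmeas measurable_prodMk_left,
      ← map_div_two_add_unitIntervalMeasure]
    rfl
  have hunion : volume.restrict (Set.Icc (0 : ℝ) (1 / 2)) + volume.restrict (Set.Icc (1 / 2) 1)
      = unitIntervalMeasure := by
    have hdisj : AEDisjoint volume (Set.Icc (0 : ℝ) (1 / 2)) (Set.Icc (1 / 2) 1) := by
      change volume (_ ∩ _) = 0
      rw [Set.Icc_inter_Icc_eq_singleton (by norm_num) (by norm_num), measure_singleton]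
    rw [← Measure.restrict_union₀ hdisj measurableSet_Icc.nullMeasurableSet,
      Set.Icc_union_Icc_eq_Icc (by norm_num) (by norm_num)]
  refine ⟨hmeas, ?_⟩
  rw [rademacherLaw_eq, Measure.prod_smul_left, Measure.add_prod, Measure.map_smul,
    Measure.map_add _ _ hmeas, hslice, hslice, ← smul_add, smul_smul,
    ENNReal.inv_mul_cancel two_ne_zero ENNReal.ofNat_ne_top, one_smul, ← hunion]
  norm_num

lemma ae_rademacherLaw_eq_one_or_eq_neg_one : ∀ᵐ ε ∂rademacherLaw, ε = 1 ∨ ε = -1 := by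
  rw [rademacherLaw_eq, Measure.ae_ennreal_smul_measure_iff (by simp), ae_add_measure_iff,
    ae_dirac_eq, ae_dirac_eq]
  exact ⟨Or.inl rfl, Or.inr rfl⟩

lemma ae_rademacher_dyadicGlue_eq_cons (n : ℕ) :
    ∀ᵐ x ∂rademacherLaw.prod unitIntervalMeasure,
      (fun j : Fin (n + 1) ↦ rademacher (j + 1) (dyadicGlue x))
        = Fin.cons x.1 (fun j : Fin n ↦ rademacher (j + 1) x.2) := by
  have hIoo : ∀ᵐ t ∂unitIntervalMeasure, t ∈ Set.Ioo (0 : ℝ) 1 := by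
    rw [unitIntervalMeasure, ← restrict_Ioo_eq_restrict_Icc]
    exact ae_restrict_mem measurableSet_Ioo
  filter_upwards [Measure.quasiMeasurePreserving_fst.ae ae_rademacherLaw_eq_one_or_eq_neg_one,
    Measure.quasiMeasurePreserving_snd.ae hIoo] with ⟨ε, t⟩ hε ht
  dsimp only at hε ht
  have hglue_one : dyadicGlue (1, t) = t / 2 := by simp [dyadicGlue]
  have hglue_neg_one : dyadicGlue (-1, t) = t / 2 + 1 / 2 := by norm_num [dyadicGlue]
  refine funext (Fin.cases ?_ fun j ↦ ?_) <;> rcases hε with rfl | rfl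
  · rw [hglue_one]
    exact rademacher_one_div_two ht
  · rw [hglue_neg_one]
    exact rademacher_one_div_two_add_half ht
  · rw [hglue_one]
    exact rademacher_succ_div_two _ t
  · rw [hglue_neg_one]
    exact rademacher_succ_succ_div_two_add_half _ t

lemma hasLaw_rademacher_pi (n : ℕ) :
    HasLaw (fun t (j : Fin n) ↦ rademacher (j + 1) t) (Measure.pi fun _ ↦ rademacherLaw)
      unitIntervalMeasure := by
  have hmeas (n : ℕ) : Measurable fun t (j : Fin n) ↦ rademacher (j + 1) t :=
    measurable_pi_lambda _ fun j ↦ measurable_rademacher _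
  refine MeasurePreserving.hasLaw ?_
  induction n with
  | zero =>
    have := Measure.isProbabilityMeasure_map (μ := unitIntervalMeasure) (hmeas 0).aemeasurable
    refine ⟨hmeas 0, (Measure.pi_eq fun s _ ↦ ?_).symm⟩
    rw [Set.eq_univ_of_forall fun _ ↦ Set.mem_univ_pi.2 (Fin.elim0 ·), measure_univ,
      Finset.univ_eq_empty, Finset.prod_empty]
  | succ n ih =>
    have hcons : MeasurePreserving
        (fun x : ℝ × ℝ ↦ (Fin.cons x.1 fun j : Fin n ↦ rademacher (j + 1) x.2 : Fin (n + 1) → ℝ))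
        (rademacherLaw.prod unitIntervalMeasure) (Measure.pi fun _ ↦ rademacherLaw) := by
      simpa only [MeasurableEquiv.piFinSuccAbove_symm_apply, Fin.insertNthEquiv_zero] using!
        (measurePreserving_piFinSuccAbove (fun _ ↦ rademacherLaw) 0).symm.comp
          ((MeasurePreserving.id rademacherLaw).prod ih)
    refine ⟨hmeas _, ?_⟩
    rw [← measurePreserving_dyadicGlue.map_eq,
      Measure.map_map (hmeas _) measurePreserving_dyadicGlue.measurable, ← hcons.map_eq]
    exact Measure.map_congr (ae_rademacher_dyadicGlue_eq_cons n)

lemma hasLaw_rademacher (j : ℕ) :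
    HasLaw (rademacher (j + 1)) rademacherLaw unitIntervalMeasure :=
  (measurePreserving_eval (fun _ : Fin (j + 1) ↦ rademacherLaw) (Fin.last j)).hasLaw.comp
    (hasLaw_rademacher_pi (j + 1))

lemma iIndepFun_rademacher :
    iIndepFun (fun j ↦ rademacher (j + 1)) unitIntervalMeasure := by
  have hfin (n : ℕ) : iIndepFun (fun j : Fin n ↦ rademacher (j + 1)) unitIntervalMeasure :=
    (iIndepFun_iff_hasLaw_pi_pi fun j : Fin n ↦ hasLaw_rademacher j).2 (hasLaw_rademacher_pi n)
  have hrestrict (s : Finset ℕ) :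
      iIndepFun (fun j : s ↦ rademacher (j + 1)) unitIntervalMeasure := by
    obtain ⟨n, hn⟩ := s.exists_nat_subset_range
    have hinj : Function.Injective fun j : s ↦ (⟨j, Finset.mem_range.1 (hn j.2)⟩ : Fin n) :=
      fun i j hij ↦ Subtype.ext (Fin.mk.inj hij)
    exact (hfin n).precomp hinj
  exact iIndepFun_iff_finset.2 hrestrict

lemma ae_abs_rademacher_eq_one (j : ℕ) :
    ∀ᵐ t ∂unitIntervalMeasure, |rademacher (j + 1) t| = 1 := by
  refine ((hasLaw_rademacher j).ae_iff (p := fun ε ↦ |ε| = 1)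
    (measurableSet_eq_fun measurable_abs measurable_const).mem).2 ?_
  filter_upwards [ae_rademacherLaw_eq_one_or_eq_neg_one] with ε hε
  exact (abs_eq zero_le_one).2 hε

lemma integral_rademacher (j : ℕ) : ∫ t, rademacher (j + 1) t ∂unitIntervalMeasure = 0 := by
  rw [(hasLaw_rademacher j).integral_eq, integral_bernoulliMeasure]
  norm_num

lemma integral_rademacher_sq (j : ℕ) :
    ∫ t, rademacher (j + 1) t ^ 2 ∂unitIntervalMeasure = 1 := by
  have hae : ∀ᵐ t ∂unitIntervalMeasure, rademacher (j + 1) t ^ 2 = 1 := by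
    filter_upwards [ae_abs_rademacher_eq_one j] with t ht
    rw [← sq_abs, ht, one_pow]
  rw [integral_congr_ae hae, integral_const, probReal_univ, one_smul]

lemma integral_rademacher_mul_rademacher {i j : ℕ} (hij : i ≠ j) :
    ∫ t, rademacher (i + 1) t * rademacher (j + 1) t ∂unitIntervalMeasure = 0 := by
  rw [(iIndepFun_rademacher.indepFun hij).integral_fun_mul_eq_mul_integral
    (measurable_rademacher _).aestronglyMeasurable (measurable_rademacher _).aestronglyMeasurable,
    integral_rademacher, zero_mul]

lemma integrable_rademacher_mul_rademacher (i j : ℕ) :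
    Integrable (fun t ↦ rademacher (i + 1) t * rademacher (j + 1) t) unitIntervalMeasure := by
  refine .of_bound (C := 1)
    ((measurable_rademacher _).mul (measurable_rademacher _)).aestronglyMeasurable ?_
  filter_upwards [ae_abs_rademacher_eq_one i, ae_abs_rademacher_eq_one j] with t hi hj
  rw [norm_mul, norm_eq_abs, norm_eq_abs, hi, hj, one_mul]

end RademacherFunctions

section RademacherMoments

/-- The `r`-th absolute moment of `(r₁ + ⋯ + rₙ) / √n` on `[0,1]`. -/
noncomputable def normalizedRademacherMoment (r : ℝ) (n : ℕ) : ℝ :=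
  ∫ t, |(√n)⁻¹ * ∑ j ∈ Finset.range n, rademacher (j + 1) t| ^ r ∂unitIntervalMeasure

lemma normalizedRademacherMoment_one (r : ℝ) : normalizedRademacherMoment r 1 = 1 := by
  have hae : ∀ᵐ t ∂unitIntervalMeasure,
      |(√(1 : ℕ))⁻¹ * ∑ j ∈ Finset.range 1, rademacher (j + 1) t| ^ r = 1 := by
    filter_upwards [ae_abs_rademacher_eq_one 0] with t ht
    simp only [Nat.cast_one, sqrt_one, inv_one, one_mul, Finset.sum_range_one, ht, one_rpow]
  rw [normalizedRademacherMoment, integral_congr_ae hae, integral_const, probReal_univ, one_smul]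

lemma abs_inv_sqrt_two_mul_add_rpow {x y r : ℝ} (hx : |x| = 1) (hy : |y| = 1) (hr : 0 < r) :
    |(√2)⁻¹ * (x + y)| ^ r = 2 ^ (r / 2 - 1) * (1 + x * y) := by
  have hxx : x * x = 1 := by rw [← abs_mul_abs_self, hx, one_mul]
  rcases abs_eq_abs.1 (hy.trans hx.symm) with rfl | rfl
  · have habs : |(√2)⁻¹ * (y + y)| = √2 := by
      rw [← two_mul, ← mul_assoc, inv_mul_eq_div, div_sqrt, abs_mul, hx, mul_one,
        abs_of_nonneg (sqrt_nonneg 2)]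
    rw [habs, hxx, one_add_one_eq_two, ← rpow_add_one two_ne_zero, sub_add_cancel, sqrt_eq_rpow,
      ← rpow_mul zero_le_two, one_div_mul_eq_div]
  · rw [add_neg_cancel, mul_zero, abs_zero, zero_rpow hr.ne', mul_neg, hxx, add_neg_cancel,
      mul_zero]

lemma normalizedRademacherMoment_two {r : ℝ} (hr : 0 < r) :
    normalizedRademacherMoment r 2 = 2 ^ (r / 2 - 1) := by
  have hae : ∀ᵐ t ∂unitIntervalMeasure,
      |(√(2 : ℕ))⁻¹ * ∑ j ∈ Finset.range 2, rademacher (j + 1) t| ^ r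
        = 2 ^ (r / 2 - 1) * (1 + rademacher (0 + 1) t * rademacher (1 + 1) t) := by
    filter_upwards [ae_abs_rademacher_eq_one 0, ae_abs_rademacher_eq_one 1] with t h₀ h₁
    rw [Finset.sum_range_succ, Finset.sum_range_one, Nat.cast_ofNat]
    exact abs_inv_sqrt_two_mul_add_rpow h₀ h₁ hr
  rw [normalizedRademacherMoment, integral_congr_ae hae, integral_const_mul,
    integral_add (integrable_const _) (integrable_rademacher_mul_rademacher 0 1),
    integral_rademacher_mul_rademacher zero_ne_one, integral_const, probReal_univ, one_smul,
    add_zero, mul_one]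

theorem tendsto_normalizedRademacherMoment {r : ℝ} (hr : 0 ≤ r) (hr2 : r < 2) :
    Tendsto (normalizedRademacherMoment r) atTop
      (𝓝 (2 ^ (r / 2) * (Gamma ((r + 1) / 2) / √π))) := by
  have h := tendsto_integral_abs_inv_sqrt_mul_sum_rpow (integral_rademacher 0)
    (integral_rademacher_sq 0) iIndepFun_rademacher
    (fun j ↦ (hasLaw_rademacher j).identDistrib (hasLaw_rademacher 0)) hr hr2
  rw [integral_abs_rpow_gaussianReal one_ne_zero (by linarith), NNReal.coe_one, mul_one] at h
  exact h

end RademacherMoments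

section MultipleKhintchine

lemma integral_abs_sum_prod_rpow {ι κ : Type*} [Fintype ι] [DecidableEq ι] [Fintype κ]
    {E : ι → Type*} [∀ i, MeasurableSpace (E i)] (μ : ∀ i, Measure (E i)) [∀ i, SigmaFinite (μ i)]
    (f : ∀ i, κ → E i → ℝ) (r : ℝ) :
    ∫ x, |∑ s : ι → κ, ∏ i, f i (s i) (x i)| ^ r ∂Measure.pi μ
      = ∏ i, ∫ x, |∑ j, f i j x| ^ r ∂μ i := by
  rw [← integral_fintype_prod_eq_prod]
  refine integral_congr_ae (ae_of_all _ fun x ↦ ?_)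
  have hprod : ∑ s : ι → κ, ∏ i, f i (s i) (x i) = ∏ i, ∑ j, f i j (x i) := by
    rw [Finset.prod_univ_sum, Fintype.piFinset_univ]
  dsimp only
  rw [hprod, Finset.abs_prod, finsetProd_rpow _ _ fun i _ ↦ abs_nonneg _]

lemma restrict_Icc_zero_one_eq_pi (ι : Type*) [Fintype ι] :
    (volume : Measure (ι → ℝ)).restrict (Set.Icc 0 1)
      = Measure.pi fun _ ↦ unitIntervalMeasure := by
  rw [← Set.pi_univ_Icc, volume_pi, Measure.restrict_pi_pi]
  rfl

/-- `K` is a valid constant in the `m`-fold Khintchine inequality, bounding the `ℓ²` norm of an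
array of coefficients by the `Lʳ` norm of its multiple Rademacher sum. Array indices start at `0`,
those of the Rademacher functions at `1`. -/
def IsMultipleKhintchineConst (r : ℝ) (m : ℕ) (K : ℝ) : Prop :=
  ∀ (N : ℕ) (y : (Fin m → Fin N) → ℝ),
    (∑ i : Fin m → Fin N, |y i| ^ (2 : ℝ)) ^ ((1 : ℝ) / 2)
      ≤ K * (∫ t : Fin m → ℝ in Set.Icc 0 1,
          |∑ i : Fin m → Fin N,
            (∏ k, rademacher ((i k).1 + 1) (t k)) * y i| ^ r) ^ (1 / r)

namespace IsMultipleKhintchineConst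

variable {r K : ℝ} {m : ℕ}

lemma sqrt_sum_sq_pow_le (h : IsMultipleKhintchineConst r m K) {N : ℕ} (a : Fin N → ℝ) :
    √(∑ j, a j ^ 2) ^ m ≤ K *
      ((∫ t, |∑ j, rademacher (j.1 + 1) t * a j| ^ r ∂unitIntervalMeasure) ^ (1 / r)) ^ m := by
  have hnorm : ∑ i : Fin m → Fin N, |∏ k, a (i k)| ^ (2 : ℝ) = (∑ j, a j ^ 2) ^ m := by
    simp_rw [rpow_two, sq_abs, ← Finset.prod_pow, Fintype.sum_pow]
  have hmoment : ∫ t : Fin m → ℝ in Set.Icc 0 1,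
        |∑ i : Fin m → Fin N, (∏ k, rademacher ((i k).1 + 1) (t k)) * ∏ k, a (i k)| ^ r
      = (∫ t, |∑ j, rademacher (j.1 + 1) t * a j| ^ r ∂unitIntervalMeasure) ^ m := by
    simp_rw [← Finset.prod_mul_distrib]
    rw [restrict_Icc_zero_one_eq_pi,
      integral_abs_sum_prod_rpow _ fun _ j t ↦ rademacher (j.1 + 1) t * a j,
      Finset.prod_const, Finset.card_univ, Fintype.card_fin]
  have hK := h N fun i ↦ ∏ k, a (i k)
  rw [hnorm, hmoment] at hK
  rw [sqrt_eq_rpow, rpow_pow_comm (by positivity), rpow_pow_comm (by positivity)]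
  exact hK

lemma one_le_mul_normalizedRademacherMoment_rpow_pow (h : IsMultipleKhintchineConst r m K) {n : ℕ}
    (hn : n ≠ 0) : 1 ≤ K * (normalizedRademacherMoment r n ^ (1 / r)) ^ m := by
  have hsq : ∑ _j : Fin n, (√n)⁻¹ ^ 2 = 1 := by
    rw [Finset.sum_const, Finset.card_univ, Fintype.card_fin, nsmul_eq_mul, inv_pow,
      sq_sqrt n.cast_nonneg, mul_inv_cancel₀ (Nat.cast_ne_zero.2 hn)]
  have hK := h.sqrt_sum_sq_pow_le fun _ : Fin n ↦ (√n)⁻¹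
  simp_rw [hsq, sqrt_one, one_pow, ← Finset.sum_mul] at hK
  simpa only [normalizedRademacherMoment, Finset.sum_range, mul_comm] using hK

lemma one_le (h : IsMultipleKhintchineConst r m K) : 1 ≤ K := by
  simpa only [normalizedRademacherMoment_one, one_rpow, one_pow, mul_one] using
    h.one_le_mul_normalizedRademacherMoment_rpow_pow one_ne_zero

lemma two_rpow_pow_le (h : IsMultipleKhintchineConst r m K) (hr : 0 < r) :
    ((2 : ℝ) ^ (1 / r - 1 / 2)) ^ m ≤ K := by
  have hK := h.one_le_mul_normalizedRademacherMoment_rpow_pow two_ne_zero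
  have hinv : (2 : ℝ) ^ (1 / r - 1 / 2) = (((2 : ℝ) ^ (r / 2 - 1)) ^ (1 / r))⁻¹ := by
    rw [← rpow_mul zero_le_two, ← rpow_neg zero_le_two]
    congr 1
    field_simp
    ring
  rw [normalizedRademacherMoment_two hr] at hK
  rw [hinv, inv_pow]
  exact (inv_le_iff_one_le_mul₀ (by positivity)).2 hK

lemma gaussian_pow_le (h : IsMultipleKhintchineConst r m K) (hr : 0 < r) (hr2 : r < 2) :
    ((1 / √2) * (Gamma ((r + 1) / 2) / √π) ^ (-(1 / r))) ^ m ≤ K := by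
  have hΓ : 0 < Gamma ((r + 1) / 2) / √π :=
    div_pos (Gamma_pos_of_pos (by positivity)) (sqrt_pos.2 pi_pos)
  have hlim : 1 ≤ K * (((2 : ℝ) ^ (r / 2) * (Gamma ((r + 1) / 2) / √π)) ^ (1 / r)) ^ m := by
    refine ge_of_tendsto ((((tendsto_normalizedRademacherMoment hr.le hr2).rpow_const
      (Or.inr (by positivity))).pow m).const_mul K) ?_
    filter_upwards [eventually_ne_atTop 0] with n hn
    exact h.one_le_mul_normalizedRademacherMoment_rpow_pow hn
  have hinv : 1 / √2 * (Gamma ((r + 1) / 2) / √π) ^ (-(1 / r))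
      = (((2 : ℝ) ^ (r / 2) * (Gamma ((r + 1) / 2) / √π)) ^ (1 / r))⁻¹ := by
    rw [mul_rpow (by positivity) hΓ.le, ← rpow_mul zero_le_two, mul_inv, ← rpow_neg hΓ.le,
      sqrt_eq_rpow, one_div (2 ^ _)]
    congr 3
    field_simp
  rw [hinv, inv_pow]
  exact (inv_le_iff_one_le_mul₀ (by positivity)).2 hlim

end IsMultipleKhintchineConst

end MultipleKhintchine

theorem multiple_khintchine_optimal_general {r : ℝ} (hr : 0 < r) {m : ℕ} {K : ℝ}
    (h : IsMultipleKhintchineConst r m K) : khintchineA r ^ m ≤ K := by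
  unfold khintchineA
  split_ifs with hr_le hr_lt
  · exact h.two_rpow_pow_le hr
  · exact h.gaussian_pow_le hr hr_lt
  · rw [one_pow]
    exact h.one_le

/-- Optimality: any constant in the multiple Khintchine inequality (`0 < r < 2`) is at
least `(A_r)^m`. -/
theorem multiple_khintchine_optimal (r : ℝ) (hr0 : 0 < r) (hr2 : r < 2)
    (m : ℕ) (hm : 1 ≤ m) (K : ℝ) (hK : 0 ≤ K)
    (h : ∀ (N : ℕ) (y : (Fin m → Fin N) → ℝ),
      (∑ i : Fin m → Fin N, |y i| ^ (2 : ℝ)) ^ ((1 : ℝ) / 2)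
        ≤ K * (∫ t : Fin m → ℝ in Set.Icc 0 1,
            |∑ i : Fin m → Fin N,
              (∏ k, rademacher ((i k).1 + 1) (t k)) * y i| ^ r) ^ (1 / r)) :
    khintchineA r ^ m ≤ K :=
  multiple_khintchine_optimal_general hr0 h
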